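/- arXiv:2310.10112 — 3 statements merged into one kernel-verified Lean document; each statement's English description precedes it below -/
import Mathlib

section
/- (a) There exists a rational number C with 2-adic valuation 0 (odd numerator and denominator) such that ε + 1 = C·√m·(ε − 1). (b) There exist a sign s₀ ∈ {1, −1} and a nonzero rational number r with 2-adic valuation 0 such that the principal fractional ideal of K generated by ε + s₀ equals r·𝔭·𝔩₂ (an equality of fractional ideals of ℤ[√m]). -/
open NumberField
open scoped nonZeroDivisors

/-!
Write `m = q * ∏ p i` with `q ≡ 3` and `p i ≡ 5` mod 8, and let `a² = m b² + 1`. Dividing out the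
common factor of `a + 1` and `a - 1` (which is `2` if `b` is even and `1` if `b` is odd) gives two
coprime numbers whose difference is `±1` or `±2` and whose product is `m` times a square. The one
not divisible by `q` is then `∏ i ∈ S, p i` times a square, and reducing modulo each `p i` turns the
prescribed symbols into parity conditions on `S`: these force `S = ∅` for difference `±1` and
`S = {o}` for difference `±2`, and reducing modulo `q` fixes the sign of the difference. In the
first case one obtains a smaller solution of the Pell equation, so that the fundamental solution
has `b` odd. In the second `a + 1 = p o * u²`, and the ideal identity follows from
`(ε + 1)² = 2 (a + 1) ε` by unique factorization.
-/

open scoped NumberTheorySymbols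

theorem jacobiSym_prod_left {ι : Type*} (s : Finset ι) (f : ι → ℤ) (N : ℕ) :
    J(∏ i ∈ s, f i | N) = ∏ i ∈ s, J(f i | N) := by
  classical
  induction s using Finset.induction_on with
  | empty => simp
  | insert i s hi ih => rw [Finset.prod_insert hi, Finset.prod_insert hi, jacobiSym.mul_left, ih]

theorem jacobiSym_eq_jacobiSym_sub_of_coprime {N A B D u : ℕ} (hA : A = D * u ^ 2) (hN : N ∣ B)
    (hAB : A.Coprime B) : J((D : ℤ) | N) = J((A : ℤ) - B | N) := by
  have hu : (u : ℤ).gcd N = 1 := by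
    rw [Int.gcd_natCast_natCast]
    exact hAB.of_dvd (hA ▸ (dvd_pow_self u two_ne_zero).mul_left D) hN
  have hmod : (A : ℤ) ≡ A - B [ZMOD N] := by
    rw [Int.modEq_iff_dvd]
    simpa using Int.natCast_dvd_natCast.2 hN
  rw [← jacobiSym.mod_left' hmod, hA, Nat.cast_mul, Nat.cast_pow, jacobiSym.mul_left,
    jacobiSym.sq_one' hu, mul_one]

theorem jacobiSym_neg_of_mod_four_eq_one {N : ℕ} (hN : N % 4 = 1) (a : ℤ) :
    J(-a | N) = J(a | N) := by
  rw [jacobiSym.neg a (Nat.odd_iff.2 (by lia)), ZMod.χ₄_nat_one_mod_four hN, one_mul]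

theorem jacobiSym_neg_one_of_mod_four_eq_three {N : ℕ} (hN : N % 4 = 3) : J(-1 | N) = -1 := by
  rw [jacobiSym.at_neg_one (Nat.odd_iff.2 (by lia)), ZMod.χ₄_nat_three_mod_four hN]

theorem jacobiSym_two_of_mod_eight_eq_five {N : ℕ} (hN : N % 8 = 5) : J(2 | N) = -1 := by
  rw [jacobiSym.at_two (Nat.odd_iff.2 (by lia)), ZMod.χ₈_nat_eq_if_mod_eight]
  simp [hN, show N % 2 = 1 by lia]

theorem jacobiSym_neg_two_of_mod_eight_eq_three {N : ℕ} (hN : N % 8 = 3) : J(-2 | N) = 1 := by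
  rw [jacobiSym.at_neg_two (Nat.odd_iff.2 (by lia)), ZMod.χ₈'_nat_eq_if_mod_eight]
  simp [hN, show N % 2 = 1 by lia]

theorem exists_eq_prod_mul_sq_of_coprime {ι : Type*} [DecidableEq ι] {p : ι → ℕ} {s : Finset ι}
    (hp : ∀ i ∈ s, (p i).Prime) {A B b : ℕ} (hAB : A.Coprime B)
    (h : A * B = (∏ i ∈ s, p i) * b ^ 2) :
    ∃ S ⊆ s, ∃ u v, A = (∏ i ∈ S, p i) * u ^ 2 ∧ B = (∏ i ∈ s \ S, p i) * v ^ 2 := by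
  induction s using Finset.induction_on generalizing A B with
  | empty =>
    rw [Finset.prod_empty, one_mul] at h
    obtain ⟨u, hu⟩ := exists_eq_pow_of_mul_eq_pow (Nat.isUnit_iff.2 hAB) h
    obtain ⟨v, hv⟩ :=
      exists_eq_pow_of_mul_eq_pow (Nat.isUnit_iff.2 hAB.symm) (mul_comm A B ▸ h)
    exact ⟨∅, subset_rfl, u, v, by simpa using hu, by simpa using hv⟩
  | insert i s hi ih =>
    rw [Finset.forall_mem_insert] at hp
    rw [Finset.prod_insert hi, mul_assoc] at h
    rcases hp.1.dvd_mul.1 (Dvd.intro _ h.symm) with ⟨A', rfl⟩ | ⟨B', rfl⟩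
    · rw [mul_assoc] at h
      obtain ⟨S, hS, u, v, rfl, rfl⟩ :=
        ih hp.2 hAB.coprime_mul_left (Nat.eq_of_mul_eq_mul_left hp.1.pos h)
      refine ⟨insert i S, Finset.insert_subset_insert i hS, u, v, ?_, ?_⟩
      · rw [Finset.prod_insert fun hiS => hi (hS hiS), mul_assoc]
      · rw [Finset.insert_sdiff_insert, Finset.sdiff_insert_of_notMem hi]
    · rw [mul_left_comm] at h
      obtain ⟨S, hS, u, v, rfl, rfl⟩ :=
        ih hp.2 hAB.coprime_mul_left_right (Nat.eq_of_mul_eq_mul_left hp.1.pos h)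
      have hiS : i ∉ S := fun hiS => hi (hS hiS)
      refine ⟨S, hS.trans (Finset.subset_insert i s), u, v, rfl, ?_⟩
      rw [Finset.insert_sdiff_of_notMem s hiS, Finset.prod_insert (by simp [hi]), mul_assoc]

theorem neg_one_pow_card_compl_of_odd_card {ι : Type*} [Fintype ι] [DecidableEq ι]
    (hι : Odd (Fintype.card ι)) (S : Finset ι) : (-1 : ℤ) ^ Sᶜ.card = -(-1) ^ S.card := by
  have hprod : (-1 : ℤ) ^ S.card * (-1) ^ Sᶜ.card = -1 := by
    rw [← pow_add, Finset.card_add_card_compl, hι.neg_one_pow]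
  rcases neg_one_pow_eq_or ℤ S.card with hS | hS <;> rw [hS] at hprod ⊢ <;> lia

theorem eq_empty_or_eq_singleton_of_sign_eq {ι : Type*} {S : Finset ι} {o : ι} {χ : ι → ℤ}
    (ho : χ o = -1) (hχ : ∀ i ≠ o, χ i = 1) {c : ℤ}
    (hmem : ∀ i ∈ S, χ i * -(-1) ^ S.card = c) (hnotMem : ∀ i ∉ S, (-1) ^ S.card = c) :
    S = ∅ ∧ c = 1 ∨ S = {o} ∧ c = -1 := by
  have hc : (-1) ^ S.card = c := by
    by_cases hoS : o ∈ S
    · simpa [ho] using hmem o hoS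
    · exact hnotMem o hoS
  have hS : S ⊆ {o} := by
    intro i hi
    by_contra hio
    have hneg : -(-1) ^ S.card = c := by simpa [hχ i (by simpa using hio)] using hmem i hi
    rcases neg_one_pow_eq_or ℤ S.card with h | h <;> lia
  rcases Finset.subset_singleton_iff.1 hS with rfl | rfl
  · exact .inl ⟨rfl, by simpa using hc.symm⟩
  · exact .inr ⟨rfl, by simpa using hc.symm⟩

theorem add_mul_add_one_eq_div_mul_mul_sub_one {K : Type*} [Field K] {a b x : K}
    (hx : a ^ 2 = x ^ 2 * b ^ 2 + 1) (ha : a - 1 ≠ 0) :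
    a + b * x + 1 = b / (a - 1) * x * (a + b * x - 1) := by
  field_simp
  linear_combination hx

-- For the unit `ε = a + x`, with inverse `a - x`, this is `(ε + 1)² = ε (ε + 2 + ε⁻¹)`.
theorem span_add_add_one_sq {R : Type*} [CommRing R] {a x : R} (h : a ^ 2 = x ^ 2 + 1) :
    Ideal.span {a + x + 1} ^ 2 = Ideal.span {2 * (a + 1)} := by
  have hunit : IsUnit (a + x) := .of_mul_eq_one (a - x) (by linear_combination h)
  rw [Ideal.span_singleton_pow, ← Ideal.span_singleton_mul_right_unit hunit (2 * (a + 1))]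
  congr 2
  linear_combination -h

theorem span_add_add_one_eq_mul {R : Type*} [CommRing R] [IsDedekindDomain R] {a x u c : R}
    (h : a ^ 2 = x ^ 2 + 1) (ha : a + 1 = c * u ^ 2) {P Q : Ideal R} (hP : P ^ 2 = Ideal.span {2})
    (hQ : Q ^ 2 = Ideal.span {c}) : Ideal.span {a + x + 1} = Ideal.span {u} * P * Q := by
  refine pow_left_injective two_ne_zero ?_
  calc Ideal.span {a + x + 1} ^ 2
      = Ideal.span {u ^ 2 * 2 * c} := by rw [span_add_add_one_sq h, ha]; congr 2; ring
    _ = (Ideal.span {u} * P * Q) ^ 2 := by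
      simp only [mul_pow, hP, hQ, Ideal.span_singleton_pow, Ideal.span_singleton_mul_span_singleton]

theorem padicValRat_two_natCast_of_odd {k : ℕ} (hk : Odd k) : padicValRat 2 (k : ℚ) = 0 := by
  rw [padicValRat.of_nat, padicValNat.eq_zero_of_not_dvd hk.not_two_dvd_nat, Nat.cast_zero]

/-- The Deng–Li families of primes: `q` is the prime `ℓ₁ ≡ 3 (mod 8)`, the `p i` are the primes
`ℓ₂, …, ℓ_n ≡ 5 (mod 8)`, so that evenness of `n` is oddness of `card ι`, and `o` is the index of
`ℓ₂`, the only one of them at which `q` is not a quadratic residue. Distinctness of the primes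
follows from the congruences and the symbols. -/
structure IsDengLiFamily {ι : Type*} [Fintype ι] (q : ℕ) (p : ι → ℕ) (o : ι) : Prop where
  odd_card : Odd (Fintype.card ι)
  prime_left : q.Prime
  prime_right : ∀ i, (p i).Prime
  left_mod_eight : q % 8 = 3
  right_mod_eight : ∀ i, p i % 8 = 5
  jacobiSym_left_self : J((q : ℤ) | p o) = -1
  jacobiSym_left_of_ne : ∀ i ≠ o, J((q : ℤ) | p i) = 1
  jacobiSym_right : ∀ i j, i ≠ j → J((p i : ℤ) | p j) = -1

namespace IsDengLiFamily

theorem of_fin {k : ℕ} (hk : Odd (k + 1)) {l : Fin (k + 2) → ℕ} (hprime : ∀ i, (l i).Prime)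
    (hthree : l 0 % 8 = 3) (hfive : ∀ i ≠ 0, l i % 8 = 5) (hone : J((l 0 : ℤ) | l 1) = -1)
    (htwo : ∀ j : Fin (k + 2), 2 ≤ (j : ℕ) → J((l 0 : ℤ) | l j) = 1)
    (hlt : ∀ i j : Fin (k + 2), 1 ≤ (i : ℕ) → i < j → J((l i : ℤ) | l j) = -1) :
    IsDengLiFamily (l 0) (fun i : Fin (k + 1) => l i.succ) 0 where
  odd_card := by simpa using hk
  prime_left := hprime 0
  prime_right i := hprime i.succ
  left_mod_eight := hthree
  right_mod_eight i := hfive i.succ i.succ_ne_zero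
  jacobiSym_left_self := hone
  jacobiSym_left_of_ne i hi := htwo i.succ (by
    have := Fin.val_ne_zero_iff.2 hi
    rw [Fin.val_succ]
    lia)
  jacobiSym_right i j hij := by
    have hi := hfive i.succ i.succ_ne_zero
    have hj := hfive j.succ j.succ_ne_zero
    rcases hij.lt_or_gt with hlt_ij | hgt
    · exact hlt i.succ j.succ (by simp) (Fin.succ_lt_succ_iff.2 hlt_ij)
    · rw [jacobiSym.quadratic_reciprocity_one_mod_four (by lia) (Nat.odd_iff.2 (by lia))]
      exact hlt j.succ i.succ (by simp) (Fin.succ_lt_succ_iff.2 hgt)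

variable {ι : Type*} [Fintype ι] {q : ℕ} {p : ι → ℕ} {o : ι}

theorem right_mod_four (h : IsDengLiFamily q p o) (i : ι) : p i % 4 = 1 := by
  have := h.right_mod_eight i
  lia

theorem odd_left (h : IsDengLiFamily q p o) : Odd q :=
  Nat.odd_iff.2 (by have := h.left_mod_eight; lia)

theorem odd_mul_prod (h : IsDengLiFamily q p o) : Odd (q * ∏ i, p i) :=
  h.odd_left.mul <| Finset.prod_induction p Odd (fun _ _ => Odd.mul) odd_one fun i _ =>
    Nat.odd_iff.2 (by have := h.right_mod_eight i; lia)

theorem jacobiSym_right_left (h : IsDengLiFamily q p o) : J((p o : ℤ) | q) = -1 := by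
  rw [jacobiSym.quadratic_reciprocity_one_mod_four (h.right_mod_four o) h.odd_left,
    h.jacobiSym_left_self]

theorem jacobiSym_prod_of_notMem (h : IsDengLiFamily q p o) {s : Finset ι} {i : ι} (hi : i ∉ s) :
    J(((∏ j ∈ s, p j : ℕ) : ℤ) | p i) = (-1) ^ s.card := by
  rw [Nat.cast_prod, jacobiSym_prod_left]
  exact Finset.prod_eq_pow_card fun j hj => h.jacobiSym_right j i fun hji => hi (hji ▸ hj)

variable {A B a b : ℕ}

theorem exists_eq_prod_mul_sq [DecidableEq ι] (h : IsDengLiFamily q p o) (hAB : A.Coprime B)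
    (hmul : A * B = (q * ∏ i, p i) * b ^ 2) (hqB : q ∣ B) :
    ∃ (S : Finset ι) (u v : ℕ),
      A = (∏ i ∈ S, p i) * u ^ 2 ∧ B = (q * ∏ i ∈ Sᶜ, p i) * v ^ 2 := by
  obtain ⟨B, rfl⟩ := hqB
  rw [mul_left_comm, mul_assoc] at hmul
  obtain ⟨S, -, u, v, rfl, rfl⟩ :=
    exists_eq_prod_mul_sq_of_coprime (fun i _ => h.prime_right i) hAB.coprime_mul_left_right
      (Nat.eq_of_mul_eq_mul_left h.prime_left.pos hmul)
  exact ⟨S, u, v, rfl, by rw [Finset.compl_eq_univ_sdiff, mul_assoc]⟩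

theorem eq_empty_or_eq_singleton [DecidableEq ι] (h : IsDengLiFamily q p o) {S : Finset ι}
    {u v : ℕ} (hA : A = (∏ i ∈ S, p i) * u ^ 2) (hB : B = (q * ∏ i ∈ Sᶜ, p i) * v ^ 2)
    (hAB : A.Coprime B) {c : ℤ} (hc : ∀ i, J((A : ℤ) - B | p i) = c) :
    S = ∅ ∧ c = 1 ∨ S = {o} ∧ c = -1 := by
  refine eq_empty_or_eq_singleton_of_sign_eq (χ := fun i => J((q : ℤ) | p i))
    h.jacobiSym_left_self h.jacobiSym_left_of_ne (fun i hi => ?_) fun i hi => ?_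
  · have hdvd : p i ∣ A := hA ▸ (Finset.dvd_prod_of_mem p hi).mul_right _
    calc J((q : ℤ) | p i) * -(-1) ^ S.card
        = J(((q * ∏ j ∈ Sᶜ, p j : ℕ) : ℤ) | p i) := by
          rw [Nat.cast_mul, jacobiSym.mul_left, h.jacobiSym_prod_of_notMem (by simpa using hi),
            neg_one_pow_card_compl_of_odd_card h.odd_card]
      _ = J((B : ℤ) - A | p i) := jacobiSym_eq_jacobiSym_sub_of_coprime hB hdvd hAB.symm
      _ = c := by rw [← neg_sub, jacobiSym_neg_of_mod_four_eq_one (h.right_mod_four i), hc]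
  · have hdvd : p i ∣ B :=
      hB ▸ ((Finset.dvd_prod_of_mem p (Finset.mem_compl.2 hi)).mul_left q).mul_right _
    rw [← h.jacobiSym_prod_of_notMem hi, jacobiSym_eq_jacobiSym_sub_of_coprime hA hdvd hAB, hc]

theorem eq_sq_of_sub_eq_one_or_neg_one (h : IsDengLiFamily q p o) (hAB : A.Coprime B)
    (hmul : A * B = (q * ∏ i, p i) * b ^ 2) (hqB : q ∣ B)
    (hsub : (A : ℤ) - B = 1 ∨ (A : ℤ) - B = -1) :
    (A : ℤ) - B = 1 ∧ ∃ u v, A = u ^ 2 ∧ B = (q * ∏ i, p i) * v ^ 2 := by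
  classical
  obtain ⟨S, u, v, hA, hB⟩ := h.exists_eq_prod_mul_sq hAB hmul hqB
  have hsymbol (i : ι) : J((A : ℤ) - B | p i) = 1 := by
    rcases hsub with hsub | hsub <;>
      simp [hsub, jacobiSym_neg_of_mod_four_eq_one (h.right_mod_four i)]
  have hS : S = ∅ := by
    rcases h.eq_empty_or_eq_singleton hA hB hAB hsymbol with ⟨hS, -⟩ | ⟨-, hc⟩
    · exact hS
    · norm_num at hc
  subst hS
  refine ⟨hsub.resolve_right fun hneg => ?_, u, v, by simpa using hA, by simpa using hB⟩
  have hq := jacobiSym_eq_jacobiSym_sub_of_coprime hA hqB hAB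
  rw [hneg, jacobiSym_neg_one_of_mod_four_eq_three (by have := h.left_mod_eight; lia)] at hq
  simp at hq

theorem eq_mul_sq_of_sub_eq_two_or_neg_two (h : IsDengLiFamily q p o) (hAB : A.Coprime B)
    (hmul : A * B = (q * ∏ i, p i) * b ^ 2) (hqB : q ∣ B)
    (hsub : (A : ℤ) - B = 2 ∨ (A : ℤ) - B = -2) :
    (A : ℤ) - B = 2 ∧ ∃ u, A = p o * u ^ 2 := by
  classical
  obtain ⟨S, u, v, hA, hB⟩ := h.exists_eq_prod_mul_sq hAB hmul hqB
  have hsymbol (i : ι) : J((A : ℤ) - B | p i) = -1 := by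
    rcases hsub with hsub | hsub <;>
      simp [hsub, jacobiSym_neg_of_mod_four_eq_one (h.right_mod_four i),
        jacobiSym_two_of_mod_eight_eq_five (h.right_mod_eight i)]
  have hS : S = {o} := by
    rcases h.eq_empty_or_eq_singleton hA hB hAB hsymbol with ⟨-, hc⟩ | ⟨hS, -⟩
    · norm_num at hc
    · exact hS
  subst hS
  rw [Finset.prod_singleton] at hA
  refine ⟨hsub.resolve_right fun hneg => ?_, u, hA⟩
  have hq := jacobiSym_eq_jacobiSym_sub_of_coprime hA hqB hAB
  rw [hneg, h.jacobiSym_right_left, jacobiSym_neg_two_of_mod_eight_eq_three h.left_mod_eight] at hq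
  norm_num at hq

theorem odd_of_pell_minimal (h : IsDengLiFamily q p o) (hb : 0 < b)
    (hpell : a ^ 2 = (q * ∏ i, p i) * b ^ 2 + 1)
    (hmin : ∀ a' b' : ℕ, 0 < a' → 0 < b' → a' ^ 2 = (q * ∏ i, p i) * b' ^ 2 + 1 → a ≤ a') :
    Odd b := by
  by_contra hbodd
  obtain ⟨c, rfl⟩ := even_iff_two_dvd.1 (Nat.not_odd_iff_even.1 hbodd)
  obtain ⟨d, rfl⟩ : Odd a := by
    have : Odd (a ^ 2) := ⟨(q * ∏ i, p i) * 2 * c ^ 2, by rw [hpell]; ring⟩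
    exact (Nat.odd_pow_iff two_ne_zero).1 this
  have hmul : (d + 1) * d = (q * ∏ i, p i) * c ^ 2 := by linarith
  have hcop : (d + 1).Coprime d := by simp
  have hc : 0 < c := by lia
  have hd : 0 < d :=
    pos_of_mul_pos_right (hmul ▸ mul_pos h.odd_mul_prod.pos (pow_pos hc 2)) (by lia)
  have hq : q ∣ (d + 1) * d := by rw [hmul, mul_assoc]; exact dvd_mul_right _ _
  rcases h.prime_left.dvd_mul.1 hq with hq | hq
  · have := (h.eq_sq_of_sub_eq_one_or_neg_one hcop.symm (mul_comm d _ ▸ hmul) hq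
      (.inr (by push_cast; ring))).1
    push_cast at this
    lia
  · obtain ⟨-, u, v, hu, hv⟩ := h.eq_sq_of_sub_eq_one_or_neg_one hcop hmul hq
      (.inl (by push_cast; ring))
    have hu0 : 0 < u := Nat.pos_of_ne_zero (by rintro rfl; simp at hu)
    have hv0 : 0 < v := Nat.pos_of_ne_zero fun hv0 => hd.ne' (by simpa [hv0] using hv)
    have hle : 2 * d + 1 ≤ u := hmin u v hu0 hv0 (by rw [← hu, ← hv])
    nlinarith

theorem even_of_pell (h : IsDengLiFamily q p o) (hb : Odd b)
    (hpell : a ^ 2 = (q * ∏ i, p i) * b ^ 2 + 1) : Even a := by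
  have : Even (a ^ 2) := hpell ▸ (h.odd_mul_prod.mul hb.pow).add_odd odd_one
  exact (Nat.even_pow.1 this).1

theorem exists_add_one_eq_mul_sq_of_pell (h : IsDengLiFamily q p o) (hb : Odd b)
    (hpell : a ^ 2 = (q * ∏ i, p i) * b ^ 2 + 1) : ∃ u, Odd u ∧ a + 1 = p o * u ^ 2 := by
  have ha := h.even_of_pell hb hpell
  obtain ⟨d, rfl⟩ : ∃ d, a = d + 1 := Nat.exists_eq_succ_of_ne_zero (by rintro rfl; simp at hpell)
  have hd : Odd d := by rwa [Nat.even_add_one, Nat.not_even_iff_odd] at ha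
  have hmul : (d + 2) * d = (q * ∏ i, p i) * b ^ 2 := by linarith
  have hcop : (d + 2).Coprime d := by simpa using hd
  have hq : q ∣ (d + 2) * d := by rw [hmul, mul_assoc]; exact dvd_mul_right _ _
  rcases h.prime_left.dvd_mul.1 hq with hq | hq
  · have := (h.eq_mul_sq_of_sub_eq_two_or_neg_two hcop.symm (mul_comm d _ ▸ hmul) hq
      (.inr (by push_cast; ring))).1
    push_cast at this
    lia
  · obtain ⟨-, u, hu⟩ := h.eq_mul_sq_of_sub_eq_two_or_neg_two hcop hmul hq
      (.inl (by push_cast; ring))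
    have hodd : Odd (p o * u ^ 2) := hu ▸ hd.add_even even_two
    exact ⟨u, (Nat.odd_pow_iff two_ne_zero).1 (Nat.odd_mul.1 hodd).2, hu⟩

theorem exists_rat_add_one_eq_mul_sub_one (h : IsDengLiFamily q p o) {K : Type*} [Field K]
    [CharZero K] {x : K} (hx : x ^ 2 = ((q * ∏ i, p i : ℕ) : K)) (hb : Odd b)
    (hpell : a ^ 2 = (q * ∏ i, p i) * b ^ 2 + 1) :
    ∃ C : ℚ, C ≠ 0 ∧ padicValRat 2 C = 0 ∧ a + b * x + 1 = (C : K) * x * (a + b * x - 1) := by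
  obtain ⟨d, rfl⟩ : ∃ d, a = d + 1 := Nat.exists_eq_succ_of_ne_zero (by rintro rfl; simp at hpell)
  have hd : Odd d := Nat.not_even_iff_odd.1 (Nat.even_add_one.1 (h.even_of_pell hb hpell))
  have hbQ : (b : ℚ) ≠ 0 := Nat.cast_ne_zero.2 hb.pos.ne'
  have hdQ : (d : ℚ) ≠ 0 := Nat.cast_ne_zero.2 hd.pos.ne'
  refine ⟨b / d, div_ne_zero hbQ hdQ, ?_, ?_⟩
  · rw [padicValRat.div hbQ hdQ, padicValRat_two_natCast_of_odd hb,
      padicValRat_two_natCast_of_odd hd, sub_zero]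
  · have hpellK : ((d + 1 : ℕ) : K) ^ 2 = x ^ 2 * (b : K) ^ 2 + 1 := by
      rw [hx]
      exact_mod_cast hpell
    have hdK : ((d + 1 : ℕ) : K) - 1 ≠ 0 := by simpa using hd.pos.ne'
    simpa using add_mul_add_one_eq_div_mul_mul_sub_one hpellK hdK

theorem exists_rat_spanSingleton_add_one_eq_mul (h : IsDengLiFamily q p o) {R K : Type*}
    [CommRing R] [IsDedekindDomain R] [Field K] [CharZero K] [Algebra R K] [IsFractionRing R K]
    {α : R} (hα : α ^ 2 = ((q * ∏ i, p i : ℕ) : R)) {P Q : Ideal R} (hP : P ^ 2 = Ideal.span {2})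
    (hQ : Q ^ 2 = Ideal.span {(p o : R)}) (hb : Odd b)
    (hpell : a ^ 2 = (q * ∏ i, p i) * b ^ 2 + 1) :
    ∃ r : ℚ, r ≠ 0 ∧ padicValRat 2 r = 0 ∧
      FractionalIdeal.spanSingleton R⁰ (a + b * algebraMap R K α + 1)
        = FractionalIdeal.spanSingleton R⁰ (r : K)
            * (P : FractionalIdeal R⁰ K) * (Q : FractionalIdeal R⁰ K) := by
  obtain ⟨u, hu, hau⟩ := h.exists_add_one_eq_mul_sq_of_pell hb hpell
  refine ⟨u, Nat.cast_ne_zero.2 hu.pos.ne', padicValRat_two_natCast_of_odd hu, ?_⟩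
  have hpellR : (a : R) ^ 2 = (b * α) ^ 2 + 1 := by
    rw [mul_pow, hα, mul_comm]
    exact_mod_cast congrArg (Nat.cast (R := R)) hpell
  have hauR : (a : R) + 1 = p o * (u : R) ^ 2 := by
    exact_mod_cast congrArg (Nat.cast (R := R)) hau
  have hspan := congrArg (fun I : Ideal R => (I : FractionalIdeal R⁰ K))
    (span_add_add_one_eq_mul hpellR hauR hP hQ)
  simpa [FractionalIdeal.coeIdeal_mul, FractionalIdeal.coeIdeal_span_singleton] using hspan

end IsDengLiFamily

theorem dengLi_unit_ideals_general {ι : Type*} [Fintype ι] {q : ℕ} {p : ι → ℕ} {o : ι}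
    (h : IsDengLiFamily q p o) {R K : Type*} [CommRing R] [IsDedekindDomain R] [Field K]
    [CharZero K] [Algebra R K] [IsFractionRing R K] {α : R}
    (hα : α ^ 2 = ((q * ∏ i, p i : ℕ) : R)) {P Q : Ideal R} (hP : P ^ 2 = Ideal.span {2})
    (hQ : Q ^ 2 = Ideal.span {(p o : R)}) {a b : ℕ} (hb : Odd b)
    (hpell : a ^ 2 = (q * ∏ i, p i) * b ^ 2 + 1) :
    (∃ C : ℚ, C ≠ 0 ∧ padicValRat 2 C = 0 ∧
      a + b * algebraMap R K α + 1
        = (C : K) * algebraMap R K α * (a + b * algebraMap R K α - 1)) ∧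
    ∃ r : ℚ, r ≠ 0 ∧ padicValRat 2 r = 0 ∧
      FractionalIdeal.spanSingleton R⁰ (a + b * algebraMap R K α + 1)
        = FractionalIdeal.spanSingleton R⁰ (r : K)
            * (P : FractionalIdeal R⁰ K) * (Q : FractionalIdeal R⁰ K) :=
  ⟨h.exists_rat_add_one_eq_mul_sub_one (by rw [← map_pow, hα, map_natCast]) hb hpell,
    h.exists_rat_spanSingleton_add_one_eq_mul hα hP hQ hb hpell⟩

/-- **Deng–Li family: the ideals `(ε ± 1)`.** With `ε = a + b√m` the fundamental unit:
(a) there is a 2-adic unit rational `C` with `ε + 1 = C·√m·(ε − 1)`; (b) for some sign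
`s₀` and a 2-adic unit rational `r`, the principal fractional ideal `(ε + s₀)` equals
`r·𝔭·𝔩₂`. -/
theorem dengLi_unit_ideals
    (n : ℕ) (hn : 2 ≤ n) (hneven : Even n)
    (l : Fin n → ℕ) (hlp : ∀ i, (l i).Prime) (hlinj : Function.Injective l)
    (hl1 : l ⟨0, by omega⟩ % 8 = 3)
    (hli : ∀ i : Fin n, i ≠ ⟨0, by omega⟩ → l i % 8 = 5)
    (hleg12 : jacobiSym (l ⟨0, by omega⟩ : ℤ) (l ⟨1, by omega⟩) = -1)
    (hleg1j : ∀ j : Fin n, 2 ≤ (j : ℕ) → jacobiSym (l ⟨0, by omega⟩ : ℤ) (l j) = 1)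
    (hlegij : ∀ i j : Fin n, 1 ≤ (i : ℕ) → i < j → jacobiSym (l i : ℤ) (l j) = -1)
    (m : ℕ) (hm : m = ∏ i, l i)
    (K : Type) [Field K] [NumberField K] (hdeg : Module.finrank ℚ K = 2)
    (α : 𝓞 K) (hα : α ^ 2 = (m : 𝓞 K)) (hgen : Algebra.adjoin ℤ {α} = ⊤)
    (P : Ideal (𝓞 K)) (hP : P.IsPrime) (hP2 : P ^ 2 = Ideal.span {(2 : 𝓞 K)})
    (L : Fin n → Ideal (𝓞 K)) (hL : ∀ i, (L i).IsPrime)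
    (hL2 : ∀ i, (L i) ^ 2 = Ideal.span {((l i : ℕ) : 𝓞 K)})
    (a b : ℕ) (ha : 0 < a) (hb : 0 < b) (hpell : a ^ 2 = m * b ^ 2 + 1)
    (hmin : ∀ a' b' : ℕ, 0 < a' → 0 < b' → a' ^ 2 = m * b' ^ 2 + 1 → a ≤ a') :
    (∃ C : ℚ, C ≠ 0 ∧ padicValRat 2 C = 0 ∧
      ((a : K) + (b : K) * algebraMap (𝓞 K) K α) + 1
        = (C : K) * algebraMap (𝓞 K) K α
            * (((a : K) + (b : K) * algebraMap (𝓞 K) K α) - 1)) ∧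
    (∃ s₀ : ℤ, (s₀ = 1 ∨ s₀ = -1) ∧ ∃ r : ℚ, r ≠ 0 ∧ padicValRat 2 r = 0 ∧
      FractionalIdeal.spanSingleton (𝓞 K)⁰
          (((a : K) + (b : K) * algebraMap (𝓞 K) K α) + (s₀ : K))
        = FractionalIdeal.spanSingleton (𝓞 K)⁰ (r : K)
            * (P : FractionalIdeal (𝓞 K)⁰ K)
            * (L ⟨1, by omega⟩ : FractionalIdeal (𝓞 K)⁰ K)) := by
  obtain ⟨k, rfl⟩ : ∃ k, n = k + 2 := ⟨n - 2, by lia⟩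
  have h := IsDengLiFamily.of_fin (Nat.not_even_iff_odd.1 (Nat.even_add_one.1 hneven))
    hlp hl1 hli hleg12 hleg1j hlegij
  rw [Fin.prod_univ_succ] at hm
  subst hm
  obtain ⟨hC, hr⟩ := dengLi_unit_ideals_general (K := K) h hα hP2 (hL2 1)
    (h.odd_of_pell_minimal hb hpell hmin) hpell
  exact ⟨hC, 1, .inl rfl, by simpa using hr⟩
end

section
/- The integer a satisfies a ≡ 4 (mod 8); that is, in the writing ε = a + b√m of the fundamental unit one has a = 4a′ with a′ odd. -/
/-!
If `a ^ 2 - m * b ^ 2 = 1`, then `(a + 1) * (a - 1) = m * b ^ 2`. After removing the common factor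
`2` when `a` is odd, this factors coprimely, so that `d * x ^ 2 - e * y ^ 2 = c` for some
factorization `m = d * e`, with `c = 1` if `a` is odd and `c = 2` if `a` is even. Congruences
modulo `8` force `ℓ₁ ∣ e`, and the solvability of the equation modulo `ℓ₁`, modulo `ℓ₂` and modulo
the primes dividing `d` constrains the rest:

* for `c = 1` only `d = 1` survives, and then `a + b√m` is the square of `x + y√m`, which is
  impossible for the fundamental unit;
* for `c = 2` the number of primes dividing `d` is odd, so `d ≡ 5 (mod 8)` and
  `a + 1 = d * x ^ 2 ≡ 5 (mod 8)`.
-/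

open NumberTheorySymbols
open scoped ArithmeticFunction.omega

section Pell

theorem exists_mul_sq_of_coprime_of_mul_eq_mul_sq {u v m w : ℕ} (hm : m ≠ 0)
    (huv : u.Coprime v) (h : u * v = m * w ^ 2) :
    ∃ d e x y, d * e = m ∧ u = d * x ^ 2 ∧ v = e * y ^ 2 := by
  have hde : m.gcd u * m.gcd v = m :=
    (Nat.gcd_mul_gcd_eq_iff_dvd_mul_of_coprime huv).2 (Dvd.intro _ h.symm)
  obtain ⟨u', hu⟩ := m.gcd_dvd_right u
  obtain ⟨v', hv⟩ := m.gcd_dvd_right v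
  have hsq : u' * v' = w ^ 2 := by
    apply Nat.eq_of_mul_eq_mul_left (Nat.pos_of_ne_zero hm)
    calc m * (u' * v') = m.gcd u * m.gcd v * (u' * v') := by rw [hde]
      _ = m.gcd u * u' * (m.gcd v * v') := by ring
      _ = m * w ^ 2 := by rw [← hu, ← hv, h]
  have hcop : u'.Coprime v' :=
    (huv.coprime_dvd_left (Dvd.intro_left _ hu.symm)).coprime_dvd_right (Dvd.intro_left _ hv.symm)
  obtain ⟨x, rfl⟩ := exists_eq_pow_of_mul_eq_pow (Nat.isUnit_iff.2 hcop) hsq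
  obtain ⟨y, rfl⟩ := exists_eq_pow_of_mul_eq_pow (Nat.isUnit_iff.2 hcop.symm)
    ((mul_comm _ _).trans hsq)
  exact ⟨m.gcd u, m.gcd v, x, y, hde, hu, hv⟩

theorem exists_mul_sq_eq_add_two_of_pell {a b m : ℕ} (ha : Even a)
    (hpell : a ^ 2 = m * b ^ 2 + 1) :
    ∃ d e x y, d * e = m ∧ d * x ^ 2 = e * y ^ 2 + 2 ∧ a + 1 = d * x ^ 2 := by
  have hm : m ≠ 0 := by
    rintro rfl
    simp_all
  have ha0 : a ≠ 0 := by
    rintro rfl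
    simp at hpell
  obtain ⟨v, rfl⟩ := Nat.exists_eq_add_one_of_ne_zero ha0
  have hcop : (v + 2).Coprime v := by
    simpa using (Nat.not_even_iff_odd.1 (Nat.even_add_one.1 ha)).coprime_two_left
  obtain ⟨d, e, x, y, hde, hu, hv⟩ :=
    exists_mul_sq_of_coprime_of_mul_eq_mul_sq hm hcop (w := b) (by linarith)
  exact ⟨d, e, x, y, hde, by omega, hu⟩

theorem exists_mul_sq_eq_add_one_of_pell {a b m : ℕ} (hm : Odd m) (ha : Odd a)
    (hpell : a ^ 2 = m * b ^ 2 + 1) :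
    ∃ d e x y, d * e = m ∧ d * x ^ 2 = e * y ^ 2 + 1 ∧ a = d * x ^ 2 + e * y ^ 2 := by
  have hb : Even b := by
    have : Odd (m * b ^ 2 + 1) := hpell ▸ ha.pow
    simpa [Nat.even_mul, Nat.not_even_iff_odd.2 hm, parity_simps] using this
  obtain ⟨t, rfl⟩ := ha
  obtain ⟨w, rfl⟩ := hb.exists_two_nsmul
  obtain ⟨d, e, x, y, hde, hu, hv⟩ :=
    exists_mul_sq_of_coprime_of_mul_eq_mul_sq hm.pos.ne' (w := w)
      (show (t + 1).Coprime t by simp) (by simp only [smul_eq_mul] at hpell; linarith)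
  exact ⟨d, e, x, y, hde, by omega, by omega⟩

theorem ne_sq_add_mul_sq_of_pell_minimal {a b m : ℕ} (hm : m ≠ 0) (hb : 0 < b)
    (hpell : a ^ 2 = m * b ^ 2 + 1)
    (hmin : ∀ a' b' : ℕ, 0 < a' → 0 < b' → a' ^ 2 = m * b' ^ 2 + 1 → a ≤ a')
    {x y : ℕ} (hxy : x ^ 2 = m * y ^ 2 + 1) : a ≠ x ^ 2 + m * y ^ 2 := by
  rintro rfl
  have hy : 0 < y := by
    rw [Nat.pos_iff_ne_zero]
    rintro rfl
    simp_all
  have hx : 0 < x := Nat.pos_of_ne_zero (by rintro rfl; simp at hxy)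
  have hlt : x < x ^ 2 + m * y ^ 2 :=
    (Nat.le_self_pow two_ne_zero x).trans_lt (Nat.lt_add_of_pos_right (by positivity))
  exact hlt.not_ge (hmin x y hx hy hxy)

end Pell

section Jacobi

/-- The Jacobi symbol `J(· | b)` as a monoid homomorphism on `ℕ`, so that it can be evaluated at
a squarefree number prime by prime. -/
def jacobiHom (b : ℕ) : ℕ →* ℤ where
  toFun a := J(a | b)
  map_one' := by simp
  map_mul' a₁ a₂ := by rw [Nat.cast_mul, jacobiSym.mul_left]

theorem map_eq_prod_primeFactors {M : Type*} [CommMonoid M] (φ : ℕ →* M) {n : ℕ}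
    (hn : Squarefree n) : φ n = ∏ r ∈ n.primeFactors, φ r := by
  rw [← map_prod, Nat.prod_primeFactors_of_squarefree hn]

theorem map_eq_pow_cardDistinctFactors {M : Type*} [CommMonoid M] (φ : ℕ →* M) {n : ℕ} {c : M}
    (hn : Squarefree n) (h : ∀ r ∈ n.primeFactors, φ r = c) : φ n = c ^ ω n :=
  (map_eq_prod_primeFactors φ hn).trans (Finset.prod_eq_pow_card h)

theorem jacobiSym_mul_ne_neg_one_of_dvd {d e x y c : ℤ} {r : ℕ} (hr : (r : ℤ) ∣ e)
    (h : d * x ^ 2 = e * y ^ 2 + c) : J(c * d | r) ≠ -1 := by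
  refine fun hJ ↦ ZMod.nonsquare_of_jacobiSym_eq_neg_one hJ ⟨d * x, ?_⟩
  have he : (e : ZMod r) = 0 := (ZMod.intCast_zmod_eq_zero_iff_dvd e r).2 hr
  have h' : (d * x ^ 2 : ZMod r) = e * y ^ 2 + c := by
    exact_mod_cast congrArg (Int.cast (R := ZMod r)) h
  rw [he] at h'
  push_cast
  linear_combination -(d : ZMod r) * h'

theorem jacobiSym_natCast_mul_ne_neg_one_of_dvd {d e x y c r : ℕ} (hr : r ∣ e)
    (h : d * x ^ 2 = e * y ^ 2 + c) : J(c | r) * J(d | r) ≠ -1 := by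
  rw [← jacobiSym.mul_left]
  exact jacobiSym_mul_ne_neg_one_of_dvd (x := x) (y := y) (Int.natCast_dvd_natCast.2 hr)
    (by exact_mod_cast h)

theorem jacobiSym_two_of_mod_eight {b : ℕ} (hb : b % 8 = 3 ∨ b % 8 = 5) : J(2 | b) = -1 := by
  rw [jacobiSym.at_two (Nat.odd_iff.2 (by omega)), ZMod.χ₈_nat_eq_if_mod_eight,
    if_neg (by omega), if_neg (by omega)]

theorem jacobiSym_neg_of_mod_four {b : ℕ} (hb : b % 4 = 1) (a : ℤ) : J(-a | b) = J(a | b) := by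
  rw [jacobiSym.neg a (Nat.odd_iff.2 (by omega)), ZMod.χ₄_nat_one_mod_four hb, one_mul]

end Jacobi

theorem five_pow_zmod_eight_of_odd {k : ℕ} (hk : Odd k) : (5 : ZMod 8) ^ k = 5 := by
  obtain ⟨j, rfl⟩ := hk
  rw [pow_succ, pow_mul, show (5 : ZMod 8) ^ 2 = 1 by decide, one_pow, one_mul]

theorem five_pow_zmod_eight (k : ℕ) : (5 : ZMod 8) ^ k = 1 ∨ (5 : ZMod 8) ^ k = 5 := by
  rcases k.even_or_odd with ⟨j, rfl⟩ | hk
  · rw [← two_mul, pow_mul, show (5 : ZMod 8) ^ 2 = 1 by decide, one_pow]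
    exact .inl rfl
  · exact .inr (five_pow_zmod_eight_of_odd hk)

/-- The Deng–Li conditions on the primes dividing `m = p * N`: in the notation of the paper
`p = ℓ₁`, `q = ℓ₂` and `N = ℓ₂⋯ℓₙ`, so that `n` is even exactly when `ω N` is odd. -/
structure IsDengLi (p q N : ℕ) : Prop where
  prime : p.Prime
  mod_eight_eq_three : p % 8 = 3
  squarefree : Squarefree N
  odd_cardDistinctFactors : Odd (ω N)
  mod_eight_eq_five : ∀ r ∈ N.primeFactors, r % 8 = 5
  mem_primeFactors : q ∈ N.primeFactors
  jacobiSym_left : ∀ r ∈ N.primeFactors, J(p | r) = if r = q then -1 else 1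
  jacobiSym_eq_neg_one : ∀ r ∈ N.primeFactors, ∀ s ∈ N.primeFactors, r ≠ s → J(r | s) = -1

namespace IsDengLi

variable {p q N d f : ℕ}

theorem cast_zmod_eight_of_dvd (h : IsDengLi p q N) (hd : d ∣ N) : (d : ZMod 8) = 5 ^ ω d := by
  refine map_eq_pow_cardDistinctFactors (Nat.castRingHom (ZMod 8)).toMonoidHom
    (h.squarefree.squarefree_of_dvd hd) fun r hr ↦ ?_
  exact (ZMod.natCast_eq_natCast_iff' r 5 8).2
    (h.mod_eight_eq_five r (Nat.primeFactors_mono hd h.squarefree.ne_zero hr))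

theorem odd_mul (h : IsDengLi p q N) : Odd (p * N) := by
  have hp := h.mod_eight_eq_three
  have hN : N % 8 = 5 := (ZMod.natCast_eq_natCast_iff' N 5 8).1 <|
    (h.cast_zmod_eight_of_dvd dvd_rfl).trans
      (five_pow_zmod_eight_of_odd h.odd_cardDistinctFactors)
  exact (Nat.odd_iff.2 (by omega)).mul (Nat.odd_iff.2 (by omega))

theorem odd_cardDistinctFactors_add (h : IsDengLi p q N) (hdf : d * f = N) :
    Odd (ω d + ω f) := by
  have hcop : d.Coprime f := Nat.coprime_of_squarefree_mul (hdf ▸ h.squarefree)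
  rw [← ArithmeticFunction.cardDistinctFactors_mul hcop, hdf]
  exact h.odd_cardDistinctFactors

theorem exists_eq_mul_of_mul_sq_eq_add (h : IsDengLi p q N) {e x y c : ℕ} (hde : d * e = p * N)
    (hc : c = 1 ∨ c = 2) (heq : d * x ^ 2 = e * y ^ 2 + c) : ∃ f, e = p * f ∧ d * f = N := by
  obtain ⟨g, rfl⟩ | ⟨f, rfl⟩ := h.prime.dvd_mul.1 (Dvd.intro _ hde.symm)
  · exfalso
    have hge : g * e = N := Nat.eq_of_mul_eq_mul_left h.prime.pos (by rw [← hde, mul_assoc])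
    have hp : (p : ZMod 8) = 3 := (ZMod.natCast_eq_natCast_iff' p 3 8).2 h.mod_eight_eq_three
    have hN : (g : ZMod 8) * e = 5 := by
      rw [← Nat.cast_mul, hge, h.cast_zmod_eight_of_dvd dvd_rfl,
        five_pow_zmod_eight_of_odd h.odd_cardDistinctFactors]
    have he : (e : ZMod 8) = 1 ∨ (e : ZMod 8) = 5 :=
      h.cast_zmod_eight_of_dvd (Dvd.intro_left g hge) ▸ five_pow_zmod_eight (ω e)
    have heq8 : (3 * g * x ^ 2 : ZMod 8) = e * y ^ 2 + c := by
      rw [← hp]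
      exact_mod_cast congrArg (Nat.cast (R := ZMod 8)) heq
    have hc8 : (c : ZMod 8) = 1 ∨ (c : ZMod 8) = 2 := by
      rcases hc with rfl | rfl <;> simp
    have unsolvable : ∀ E : ZMod 8, E = 1 ∨ E = 5 → ∀ G, G * E = 5 → ∀ C, C = 1 ∨ C = 2 →
        ∀ X Y, 3 * G * X ^ 2 ≠ E * Y ^ 2 + C := by decide
    exact unsolvable e he g hN c hc8 x y heq8
  · exact ⟨f, rfl, Nat.eq_of_mul_eq_mul_left h.prime.pos (by rw [← hde]; ring)⟩

theorem jacobiSym_right (h : IsDengLi p q N) (hd : d ∣ N) :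
    J(d | p) = if q ∈ d.primeFactors then -1 else 1 := by
  have hp := h.mod_eight_eq_three
  rw [← Finset.prod_ite_eq' d.primeFactors q fun _ ↦ (-1 : ℤ)]
  refine (map_eq_prod_primeFactors (jacobiHom p) (h.squarefree.squarefree_of_dvd hd)).trans
    (Finset.prod_congr rfl fun r hr ↦ ?_)
  have hrN := Nat.primeFactors_mono hd h.squarefree.ne_zero hr
  have hr8 := h.mod_eight_eq_five r hrN
  exact (jacobiSym.quadratic_reciprocity_one_mod_four (by omega) (Nat.odd_iff.2 (by omega))).trans
    (h.jacobiSym_left r hrN)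

theorem jacobiSym_of_not_dvd (h : IsDengLi p q N) (hd : d ∣ N) {r : ℕ} (hr : r ∈ N.primeFactors)
    (hrd : ¬ r ∣ d) : J(d | r) = (-1) ^ ω d :=
  map_eq_pow_cardDistinctFactors (jacobiHom r) (h.squarefree.squarefree_of_dvd hd) fun s hs ↦
    h.jacobiSym_eq_neg_one s (Nat.primeFactors_mono hd h.squarefree.ne_zero hs) r hr
      fun hsr ↦ hrd (hsr ▸ Nat.dvd_of_mem_primeFactors hs)

theorem jacobiSym_mul_of_mem_primeFactors (h : IsDengLi p q N) (hdf : d * f = N) {r : ℕ}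
    (hr : r ∈ d.primeFactors) :
    J(p * f | r) = (if r = q then -1 else 1) * (-1) ^ ω f := by
  have hrN := Nat.primeFactors_mono (Dvd.intro f hdf) h.squarefree.ne_zero hr
  have hrf : ¬ r ∣ f := fun hrf ↦ (Nat.prime_of_mem_primeFactors hr).not_dvd_one <|
    Nat.coprime_of_squarefree_mul (hdf ▸ h.squarefree) ▸
      Nat.dvd_gcd (Nat.dvd_of_mem_primeFactors hr) hrf
  rw [jacobiSym.mul_left, h.jacobiSym_left r hrN,
    h.jacobiSym_of_not_dvd (Dvd.intro_left d hdf) hrN hrf]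

section Solvability

variable {x y c : ℕ}

theorem jacobiSym_mul_ne_neg_one (h : IsDengLi p q N) (hdf : d * f = N)
    (heq : d * x ^ 2 = p * f * y ^ 2 + c) {r : ℕ} (hr : r ∈ d.primeFactors) :
    J(c | r) * ((if r = q then -1 else 1) * (-1) ^ ω f) ≠ -1 := by
  have hr8 := h.mod_eight_eq_five r
    (Nat.primeFactors_mono (Dvd.intro f hdf) h.squarefree.ne_zero hr)
  rw [← h.jacobiSym_mul_of_mem_primeFactors hdf hr, ← jacobiSym_neg_of_mod_four (by omega),
    ← jacobiSym.mul_left]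
  refine jacobiSym_mul_ne_neg_one_of_dvd (d := p * f) (e := d) (x := y) (y := x)
    (Int.natCast_dvd_natCast.2 (Nat.dvd_of_mem_primeFactors hr)) ?_
  zify at heq
  linarith

theorem odd_cardDistinctFactors_of_eq_add_two (h : IsDengLi p q N) (hdf : d * f = N)
    (heq : d * x ^ 2 = p * f * y ^ 2 + 2) : Odd (ω d) := by
  have hqd : q ∈ d.primeFactors := by
    by_contra hqd
    apply jacobiSym_natCast_mul_ne_neg_one_of_dvd (Nat.dvd_mul_right p f) heq
    rw [h.jacobiSym_right (Dvd.intro f hdf), if_neg hqd, Nat.cast_ofNat,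
      jacobiSym_two_of_mod_eight (.inl h.mod_eight_eq_three), mul_one]
  have hf : Even (ω f) := by
    by_contra hf
    apply h.jacobiSym_mul_ne_neg_one hdf heq hqd
    rw [if_pos rfl, (Nat.not_even_iff_odd.1 hf).neg_one_pow, Nat.cast_ofNat,
      jacobiSym_two_of_mod_eight (.inr (h.mod_eight_eq_five q h.mem_primeFactors))]
    norm_num
  exact (Nat.odd_add.1 (h.odd_cardDistinctFactors_add hdf)).2 hf

theorem eq_one_of_eq_add_one (h : IsDengLi p q N) (hdf : d * f = N)
    (heq : d * x ^ 2 = p * f * y ^ 2 + 1) : d = 1 := by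
  have hqd : q ∉ d.primeFactors := by
    intro hqd
    apply jacobiSym_natCast_mul_ne_neg_one_of_dvd (Nat.dvd_mul_right p f) heq
    rw [h.jacobiSym_right (Dvd.intro f hdf), if_pos hqd, Nat.cast_one, jacobiSym.one_left, one_mul]
  have hd : Even (ω d) := by
    have hq := Nat.prime_of_mem_primeFactors h.mem_primeFactors
    have hd0 : d ≠ 0 := ne_zero_of_dvd_ne_zero h.squarefree.ne_zero (Dvd.intro f hdf)
    have hqd' : ¬ q ∣ d := fun hdvd ↦ hqd (hq.mem_primeFactors hdvd hd0)
    have hqf : q ∣ f :=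
      (hq.dvd_mul.1 (hdf ▸ Nat.dvd_of_mem_primeFactors h.mem_primeFactors)).resolve_left hqd'
    by_contra hd
    apply jacobiSym_natCast_mul_ne_neg_one_of_dvd (hqf.mul_left p) heq
    rw [h.jacobiSym_of_not_dvd (Dvd.intro f hdf) h.mem_primeFactors hqd',
      (Nat.not_even_iff_odd.1 hd).neg_one_pow, Nat.cast_one, jacobiSym.one_left, one_mul]
  have hf : Odd (ω f) := (Nat.odd_add'.1 (h.odd_cardDistinctFactors_add hdf)).2 hd
  by_contra hd1
  obtain ⟨r, hr, hrd⟩ := Nat.exists_prime_and_dvd hd1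
  have hrd' : r ∈ d.primeFactors := hr.mem_primeFactors hrd
    (ne_zero_of_dvd_ne_zero h.squarefree.ne_zero (Dvd.intro f hdf))
  apply h.jacobiSym_mul_ne_neg_one hdf heq hrd'
  rw [if_neg fun hrq : r = q ↦ hqd (hrq ▸ hrd'), hf.neg_one_pow, Nat.cast_one, jacobiSym.one_left]
  norm_num

end Solvability

theorem mod_eight_eq_four_of_even (h : IsDengLi p q N) {a b : ℕ} (ha : Even a)
    (hpell : a ^ 2 = p * N * b ^ 2 + 1) : a % 8 = 4 := by
  obtain ⟨d, e, x, y, hde, heq, ha1⟩ := exists_mul_sq_eq_add_two_of_pell ha hpell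
  obtain ⟨f, rfl, hdf⟩ := h.exists_eq_mul_of_mul_sq_eq_add hde (.inr rfl) heq
  have hd : d % 8 = 5 := (ZMod.natCast_eq_natCast_iff' d 5 8).1 <|
    (h.cast_zmod_eight_of_dvd (Dvd.intro f hdf)).trans
      (five_pow_zmod_eight_of_odd (h.odd_cardDistinctFactors_of_eq_add_two hdf heq))
  have hx : Odd x := by
    have : Odd (d * x ^ 2) := ha1 ▸ ha.add_one
    exact (Nat.odd_pow_iff two_ne_zero).1 (Nat.odd_mul.1 this).2
  have hx8 : x ^ 2 % 8 = 1 := by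
    have := Nat.eight_dvd_sq_sub_one_of_odd hx
    have := (hx.pow (n := 2)).pos
    omega
  have : (a + 1) % 8 = 5 := by rw [ha1, Nat.mul_mod, hd, hx8]
  omega

theorem exists_sq_of_odd (h : IsDengLi p q N) {a b : ℕ} (ha : Odd a)
    (hpell : a ^ 2 = p * N * b ^ 2 + 1) :
    ∃ x y, x ^ 2 = p * N * y ^ 2 + 1 ∧ a = x ^ 2 + p * N * y ^ 2 := by
  obtain ⟨d, e, x, y, hde, heq, ha⟩ := exists_mul_sq_eq_add_one_of_pell h.odd_mul ha hpell
  obtain ⟨f, rfl, hdf⟩ := h.exists_eq_mul_of_mul_sq_eq_add hde (.inl rfl) heq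
  obtain rfl := h.eq_one_of_eq_add_one hdf heq
  simp only [one_mul] at hde heq ha
  exact ⟨x, y, hde ▸ heq, hde ▸ ha⟩

end IsDengLi

theorem isDengLi_prod {ι : Type*} [LinearOrder ι] {s : Finset ι} {l : ι → ℕ} {p : ℕ} {o : ι}
    (hp : p.Prime) (hp8 : p % 8 = 3) (hs : Odd s.card) (hl : ∀ i ∈ s, (l i).Prime)
    (hinj : Set.InjOn l s) (hl8 : ∀ i ∈ s, l i % 8 = 5) (ho : o ∈ s) (hpo : J(p | l o) = -1)
    (hpl : ∀ i ∈ s, i ≠ o → J(p | l i) = 1)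
    (hll : ∀ i ∈ s, ∀ j ∈ s, i < j → J(l i | l j) = -1) :
    IsDengLi p (l o) (∏ i ∈ s, l i) := by
  have hfac : (∏ i ∈ s, l i).primeFactors = s.image l := by
    have hprod : ∏ i ∈ s, l i = ∏ r ∈ s.image l, r :=
      (Finset.prod_image (f := fun r ↦ r) hinj).symm
    rw [hprod]
    exact Nat.primeFactors_prod (by simpa using hl)
  constructor
  case prime => exact hp
  case mod_eight_eq_three => exact hp8
  case squarefree =>
    refine Finset.squarefree_prod_of_pairwise_isCoprime (fun i hi j hj hij ↦ ?_)
      fun i hi ↦ (hl i hi).prime.squarefree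
    exact Nat.coprime_iff_isRelPrime.1
      ((Nat.coprime_primes (hl i hi) (hl j hj)).2 (hinj.ne hi hj hij))
  case odd_cardDistinctFactors =>
    change Odd (∏ i ∈ s, l i).primeFactors.card
    rwa [hfac, Finset.card_image_of_injOn hinj]
  all_goals simp only [hfac, Finset.forall_mem_image]
  case mod_eight_eq_five => exact hl8
  case mem_primeFactors => exact Finset.mem_image_of_mem l ho
  case jacobiSym_left =>
    intro i hi
    by_cases hio : i = o
    · rw [hio, hpo, if_pos rfl]
    · rw [hpl i hi hio, if_neg (hinj.ne hi ho hio)]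
  case jacobiSym_eq_neg_one =>
    intro i hi j hj hij
    have hi8 := hl8 i hi
    have hj8 := hl8 j hj
    rcases lt_or_gt_of_ne (ne_of_apply_ne l hij) with hlt | hgt
    · exact hll i hi j hj hlt
    · rw [jacobiSym.quadratic_reciprocity_one_mod_four (by omega) (Nat.odd_iff.2 (by omega))]
      exact hll j hj i hi hgt

theorem isDengLi_prod_fin {n : ℕ} (hn : Even n) {z o : Fin n} (hz : (z : ℕ) = 0)
    (ho : (o : ℕ) = 1) {l : Fin n → ℕ} (hl : ∀ i, (l i).Prime) (hinj : Function.Injective l)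
    (hlz : l z % 8 = 3) (hl8 : ∀ i, i ≠ z → l i % 8 = 5) (hzo : J(l z | l o) = -1)
    (hzl : ∀ j : Fin n, 2 ≤ (j : ℕ) → J(l z | l j) = 1)
    (hll : ∀ i j : Fin n, 1 ≤ (i : ℕ) → i < j → J(l i | l j) = -1) :
    IsDengLi (l z) (l o) (∏ i ∈ {z}ᶜ, l i) := by
  have mem_compl (i : Fin n) : i ∈ ({z} : Finset (Fin n))ᶜ ↔ 1 ≤ (i : ℕ) := by
    simp [Fin.ext_iff, hz, Nat.one_le_iff_ne_zero]
  apply isDengLi_prod (hl z) hlz (hinj := hinj.injOn) (hpo := hzo)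
  case hs =>
    rw [Finset.card_compl, Fintype.card_fin, Finset.card_singleton]
    exact Nat.Even.sub_odd z.pos hn odd_one
  case hl => exact fun i _ ↦ hl i
  case hl8 => exact fun i hi ↦ hl8 i (by simpa using hi)
  case ho => exact (mem_compl o).2 ho.ge
  case hpl =>
    intro j hj hjo
    have hj0 := (mem_compl j).1 hj
    have hj1 : (j : ℕ) ≠ 1 := fun h ↦ hjo (Fin.ext (h.trans ho.symm))
    exact hzl j (by omega)
  case hll => exact fun i hi j _ hij ↦ hll i j ((mem_compl i).1 hi) hij

/-- The hypothesis `hsq` says that `a + b√m` is not a square in `ℤ[√m]`, where `m = p * N`; this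
holds for every odd power of the fundamental unit. -/
theorem dengLi_a_mod_eight_general {p q N a b : ℕ} (h : IsDengLi p q N)
    (hpell : a ^ 2 = p * N * b ^ 2 + 1)
    (hsq : ∀ x y : ℕ, x ^ 2 = p * N * y ^ 2 + 1 → a ≠ x ^ 2 + p * N * y ^ 2) :
    a % 8 = 4 := by
  refine h.mod_eight_eq_four_of_even (Nat.not_odd_iff_even.1 fun ha ↦ ?_) hpell
  obtain ⟨x, y, hxy, hax⟩ := h.exists_sq_of_odd ha hpell
  exact hsq x y hxy hax

/-- **Deng–Li family: `a ≡ 4 (mod 8)`.** In the writing `ε = a + b√m` of the fundamental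
unit, one has `a = 4a′` with `a′` odd. -/
theorem dengLi_a_mod_eight
    (n : ℕ) (hn : 2 ≤ n) (hneven : Even n)
    (l : Fin n → ℕ) (hlp : ∀ i, (l i).Prime) (hlinj : Function.Injective l)
    (hl1 : l ⟨0, by omega⟩ % 8 = 3)
    (hli : ∀ i : Fin n, i ≠ ⟨0, by omega⟩ → l i % 8 = 5)
    (hleg12 : jacobiSym (l ⟨0, by omega⟩ : ℤ) (l ⟨1, by omega⟩) = -1)
    (hleg1j : ∀ j : Fin n, 2 ≤ (j : ℕ) → jacobiSym (l ⟨0, by omega⟩ : ℤ) (l j) = 1)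
    (hlegij : ∀ i j : Fin n, 1 ≤ (i : ℕ) → i < j → jacobiSym (l i : ℤ) (l j) = -1)
    (m : ℕ) (hm : m = ∏ i, l i)
    (a b : ℕ) (ha : 0 < a) (hb : 0 < b) (hpell : a ^ 2 = m * b ^ 2 + 1)
    (hmin : ∀ a' b' : ℕ, 0 < a' → 0 < b' → a' ^ 2 = m * b' ^ 2 + 1 → a ≤ a') :
    a % 8 = 4 := by
  have hdengLi := isDengLi_prod_fin hneven rfl rfl hlp hlinj hl1 hli hleg12 hleg1j hlegij
  rw [hm, Fintype.prod_eq_mul_prod_compl ⟨0, by omega⟩ l] at hpell hmin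
  exact dengLi_a_mod_eight_general hdengLi hpell fun _ _ ↦
    ne_sq_add_mul_sq_of_pell_minimal hdengLi.odd_mul.pos.ne' hb hpell hmin
end

section
/- Let m ≥ 3 be a squarefree integer with m ≡ 3 (mod 4), let χ be given by χ(a) = J(m|a) (Jacobi symbol) for odd a, and let c be an odd positive integer with gcd(c, m) = 1. For n ≥ 0 set f_n = 2^(n+2)·m, and for each integer a with 1 ≤ a ≤ f_n and gcd(a, 2m) = 1 let a′_c be the unique integer with 1 ≤ a′_c ≤ f_n and a′_c·c ≡ a (mod f_n), and set λ^n_a(c) = (a′_c·c − a)/f_n ∈ ℤ. Define the integer T_n(c) = ∑_a ( λ^n_a(c) + (1 − c)/2 )·a·χ(a), the sum over the integers 1 ≤ a ≤ f_n with gcd(a, 2m) = 1. Then for every n ≥ 0 one has the congruence T_{n+1}(c) ≡ T_n(c) (mod 2^(n+2)). -/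
open Finset

/-!
If `a' * c = a + λ * f`, then `λ + (1 - c) / 2 = c * B₁(a' / f) - B₁(a / f)` with
`B₁(x) = x - 1 / 2`. When `a` runs over its `d` lifts modulo `d * f`, the corresponding solutions
run over the `d` lifts of `a'`, so these weights inherit the distribution relation
`∑ j < d, B₁((x + j) / d) = B₁(x)`: the weights of the lifts of `a` add up to the weight of `a`.
Regrouping a sum of level `d * f` by residues modulo `f` therefore changes it only through the
variation of the summed function `a ↦ a * χ a` along those residues, which is divisible by `f`.
-/

section LiftsOfResidues

variable {M : Type*} [AddCommMonoid M] {f d : ℕ}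

lemma sum_Icc_mul_eq_sum_sum_range (g : ℕ → M) :
    ∑ a ∈ Icc 1 (d * f), g a = ∑ a ∈ Icc 1 f, ∑ j ∈ range d, g (a + j * f) := by
  rw [sum_comm]
  induction d with
  | zero => simp
  | succ d ih =>
    have last_block : ∑ a ∈ Icc 1 f, g (a + d * f) = ∑ a ∈ Ioc (d * f) ((d + 1) * f), g a := by
      calc ∑ a ∈ Icc 1 f, g (a + d * f) = ∑ a ∈ (Ioc 0 f).map (addRightEmbedding (d * f)), g a :=
            (sum_map (Ioc 0 f) (addRightEmbedding (d * f)) g).symm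
        _ = ∑ a ∈ Ioc (d * f) ((d + 1) * f), g a := by
            rw [map_add_right_Ioc, zero_add, add_one_mul, add_comm f]
    rw [sum_range_succ, ← ih, last_block]
    exact (sum_Ioc_consecutive g (Nat.zero_le _) (Nat.mul_le_mul_right f d.le_succ)).symm

lemma sum_filter_Icc_mul_eq_sum_sum_range {P : ℕ → Prop} [DecidablePred P]
    (hP : Function.Periodic P f) (g : ℕ → M) :
    ∑ a ∈ Icc 1 (d * f) with P a, g a =
      ∑ a ∈ Icc 1 f with P a, ∑ j ∈ range d, g (a + j * f) := by
  have hP_lift (a j : ℕ) : P (a + j * f) ↔ P a := iff_of_eq (hP.nsmul j a)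
  rw [sum_filter, sum_filter, sum_Icc_mul_eq_sum_sum_range]
  refine sum_congr rfl fun a _ => ?_
  simp only [hP_lift]
  split_ifs <;> simp

lemma exists_lt_eq_add_mul_of_modEq {b x : ℕ} (hb : b ∈ Icc 1 f) (hx : x ∈ Icc 1 (d * f))
    (h : x ≡ b [MOD f]) : ∃ k < d, x = b + k * f := by
  rw [mem_Icc] at hb hx
  obtain ⟨k, hk⟩ := Nat.modEq_iff_dvd.mp h.symm
  have hk_nonneg : 0 ≤ k := by
    by_contra! hneg
    nlinarith
  lift k to ℕ using hk_nonneg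
  have hxk : x = b + k * f := by
    zify
    linarith
  refine ⟨k, ?_, hxk⟩
  by_contra! hdk
  nlinarith

lemma sum_range_eq_sum_add_mul_of_modEq {b : ℕ} {x : ℕ → ℕ} (hb : b ∈ Icc 1 f)
    (hx : ∀ j < d, x j ∈ Icc 1 (d * f)) (hmod : ∀ j < d, x j ≡ b [MOD f])
    (hinj : Set.InjOn x (range d)) (g : ℕ → M) :
    ∑ j ∈ range d, g (x j) = ∑ j ∈ range d, g (b + j * f) := by
  have hlift (j : ℕ) (hj : j < d) := exists_lt_eq_add_mul_of_modEq hb (hx j hj) (hmod j hj)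
  choose! k hk_lt hxk using hlift
  have hk_inj : Set.InjOn k (range d) := fun i hi j hj hij =>
    hinj hi hj <| by rw [hxk i (mem_range.mp hi), hxk j (mem_range.mp hj), hij]
  have hk_image : (range d).image k = range d :=
    eq_of_subset_of_card_le
      (image_subset_iff.mpr fun j hj => mem_range.mpr (hk_lt j (mem_range.mp hj)))
      (card_image_of_injOn hk_inj).ge
  calc ∑ j ∈ range d, g (x j) = ∑ j ∈ range d, g (b + k j * f) :=
        sum_congr rfl fun j hj => by rw [hxk j (mem_range.mp hj)]
    _ = ∑ j ∈ (range d).image k, g (b + j * f) :=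
        (sum_image (f := fun i => g (b + i * f)) hk_inj).symm
    _ = ∑ j ∈ range d, g (b + j * f) := by rw [hk_image]

lemma sum_range_eq_sum_add_mul_of_mul_eq {b : ℕ} {a c l : ℤ} {x : ℕ → ℕ} {L : ℕ → ℤ}
    (hfc : IsCoprime (f : ℤ) c) (hb : b ∈ Icc 1 f) (hbc : (b : ℤ) * c = a + l * f)
    (hx : ∀ j < d, x j ∈ Icc 1 (d * f))
    (hxc : ∀ j < d, (x j : ℤ) * c = a + j * f + L j * (d * f)) (g : ℕ → M) :
    ∑ j ∈ range d, g (x j) = ∑ j ∈ range d, g (b + j * f) := by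
  have hf : (f : ℤ) ≠ 0 := by
    rw [mem_Icc] at hb
    omega
  have hmod (j : ℕ) (hj : j < d) : x j ≡ b [MOD f] := by
    refine (Nat.modEq_iff_dvd.mpr <| hfc.dvd_of_dvd_mul_right ⟨j + L j * d - l, ?_⟩).symm
    linear_combination hxc j hj - hbc
  have hinj : Set.InjOn x (range d) := by
    intro i hi j hj hij
    rw [coe_range, Set.mem_Iio] at hi hj
    have hij_cast : (x i : ℤ) = x j := congrArg Nat.cast hij
    have hquot : (i : ℤ) + L i * d = j + L j * d := mul_right_cancel₀ hf <| by
      linear_combination c * hij_cast - hxc i hi + hxc j hj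
    refine Nat.ModEq.eq_of_lt_of_lt (Nat.modEq_iff_dvd.mpr ⟨L i - L j, ?_⟩) hi hj
    linear_combination -hquot
  exact sum_range_eq_sum_add_mul_of_modEq hb hx hmod hinj g

end LiftsOfResidues

/-- `l` is the coefficient `λ_a(c)` of level `f`, that is `(a'c - a) / f` for a representative
`1 ≤ a' ≤ f` of `a / c` modulo `f`. The division is cleared, so that the one equation also
expresses `a'c ≡ a (mod f)`. -/
def IsTwistCoeff (f : ℕ) (c : ℤ) (a : ℕ) (l : ℤ) : Prop :=
  ∃ b ∈ Icc 1 f, (b : ℤ) * c = a + l * f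

namespace IsTwistCoeff

variable {f d a : ℕ} {c l : ℤ} {L : ℕ → ℤ}

lemma sum_two_mul_add_one_sub (hfc : IsCoprime (f : ℤ) c) (hd : d ≠ 0) (h : IsTwistCoeff f c a l)
    (hL : ∀ j < d, IsTwistCoeff (d * f) c (a + j * f) (L j)) :
    ∑ j ∈ range d, (2 * L j + 1 - c) = 2 * l + 1 - c := by
  obtain ⟨b, hb, hbc⟩ := h
  choose! x hx hxc using hL
  push_cast at hxc
  have hf : (f : ℤ) ≠ 0 := by
    rw [mem_Icc] at hb
    omega
  have hsum_x : ∑ j ∈ range d, (x j : ℤ) = ∑ j ∈ range d, ((b + j * f : ℕ) : ℤ) :=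
    sum_range_eq_sum_add_mul_of_mul_eq hfc hb hbc hx hxc _
  have hsum_xc : (∑ j ∈ range d, (x j : ℤ)) * c = ∑ j ∈ range d, (a + j * f + L j * (d * f)) := by
    rw [sum_mul]
    exact sum_congr rfl fun j hj => hxc j (mem_range.mp hj)
  have hgauss : (∑ j ∈ range d, (j : ℤ)) * 2 = d * (d - 1) := by
    rw [← Nat.cast_sum, ← Nat.cast_pred (Nat.pos_of_ne_zero hd)]
    exact_mod_cast sum_range_id_mul_two d
  simp only [hsum_x, Nat.cast_add, Nat.cast_mul, sum_add_distrib, sum_const, card_range,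
    nsmul_eq_mul, ← sum_mul] at hsum_xc
  simp only [sum_sub_distrib, sum_add_distrib, ← mul_sum, sum_const, card_range, nsmul_eq_mul]
  apply mul_left_cancel₀ (mul_ne_zero (Nat.cast_ne_zero.mpr hd) hf)
  linear_combination (-2) * hsum_xc + 2 * d * hbc + (c - 1) * f * hgauss

lemma sum_add_one_sub_div_two (hfc : IsCoprime (f : ℤ) c) (hd : d ≠ 0) (hc : Odd c)
    (h : IsTwistCoeff f c a l) (hL : ∀ j < d, IsTwistCoeff (d * f) c (a + j * f) (L j)) :
    ∑ j ∈ range d, (L j + (1 - c) / 2) = l + (1 - c) / 2 := by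
  have hhalf : 2 * ((1 - c) / 2) = 1 - c := Int.two_mul_ediv_two_of_even (odd_one.sub_odd hc)
  refine mul_left_cancel₀ two_ne_zero ?_
  simpa only [mul_sum, mul_add, hhalf, add_sub_assoc] using h.sum_two_mul_add_one_sub hfc hd hL

end IsTwistCoeff

section Coherence

variable {R : Type*} [CommRing R] {r : R} {f d : ℕ} {P : ℕ → Prop} {g : ℕ → R}

lemma dvd_apply_add_mul_sub_apply (hP : Function.Periodic P f)
    (hg : ∀ a, P a → r ∣ g (a + f) - g a) {a : ℕ} (ha : P a) (j : ℕ) :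
    r ∣ g (a + j * f) - g a := by
  induction j with
  | zero => simp
  | succ j ih =>
    have hPj : P (a + j * f) := (hP.nsmul j a).mpr ha
    rw [Nat.succ_mul, ← add_assoc]
    simpa only [sub_add_sub_cancel] using dvd_add (hg _ hPj) ih

variable [DecidablePred P]

lemma dvd_sum_mul_sub_sum_mul_of_distribution {w₀ w₁ : ℕ → R} (hP : Function.Periodic P f)
    (hg : ∀ a, P a → r ∣ g (a + f) - g a)
    (hw : ∀ a ∈ Icc 1 f, P a → ∑ j ∈ range d, w₁ (a + j * f) = w₀ a) :
    r ∣ ∑ a ∈ Icc 1 (d * f) with P a, w₁ a * g a - ∑ a ∈ Icc 1 f with P a, w₀ a * g a := by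
  rw [sum_filter_Icc_mul_eq_sum_sum_range hP, ← sum_sub_distrib]
  refine dvd_sum fun a ha => ?_
  obtain ⟨haf, hPa⟩ := mem_filter.mp ha
  rw [← hw a haf hPa, sum_mul, ← sum_sub_distrib]
  refine dvd_sum fun j _ => ?_
  rw [← mul_sub]
  exact (dvd_apply_add_mul_sub_apply hP hg hPa j).mul_left _

/-- In the application `f` and `d * f` are two conductors of the tower, `P` is coprimality to `2m`,
and `g a = a * χ a`. -/
theorem twisted_measure_coherence_general {c : ℤ} {lam₀ lam₁ : ℕ → ℤ}
    (hfc : IsCoprime (f : ℤ) c) (hc : Odd c) (hd : d ≠ 0) (hP : Function.Periodic P f)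
    (hlam₀ : ∀ a ∈ Icc 1 f, P a → IsTwistCoeff f c a (lam₀ a))
    (hlam₁ : ∀ a ∈ Icc 1 (d * f), P a → IsTwistCoeff (d * f) c a (lam₁ a))
    (hg : ∀ a, P a → r ∣ g (a + f) - g a) :
    r ∣ ∑ a ∈ Icc 1 (d * f) with P a, ((lam₁ a + (1 - c) / 2 : ℤ) : R) * g a
      - ∑ a ∈ Icc 1 f with P a, ((lam₀ a + (1 - c) / 2 : ℤ) : R) * g a := by
  refine dvd_sum_mul_sub_sum_mul_of_distribution hP hg fun a ha hPa => ?_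
  have hlift (j : ℕ) (hj : j < d) : a + j * f ∈ Icc 1 (d * f) := by
    rw [mem_Icc] at ha ⊢
    constructor <;> nlinarith
  rw [← Int.cast_sum, (hlam₀ a ha hPa).sum_add_one_sub_div_two hfc hd hc fun j hj =>
    hlam₁ _ (hlift j hj) ((hP.nsmul j a).mpr hPa)]

end Coherence

lemma jacobiSym_add_right_of_four_mul_dvd {a : ℤ} {b f : ℕ} (hb : Odd b)
    (hf : 4 * a.natAbs ∣ f) : jacobiSym a (b + f) = jacobiSym a b := by
  have hf_even : Even f :=
    even_iff_two_dvd.mpr <| ((by decide : 2 ∣ 4).mul_right a.natAbs).trans hf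
  rw [jacobiSym.mod_right a (hb.add_even hf_even), jacobiSym.mod_right a hb, Nat.add_mod,
    Nat.mod_eq_zero_of_dvd hf, add_zero, Nat.mod_mod]

lemma dvd_mul_jacobiSym_add_sub {a r : ℤ} {b f : ℕ} (hb : Odd b) (hf : 4 * a.natAbs ∣ f)
    (hr : r ∣ f) : r ∣ (b + f : ℕ) * jacobiSym a (b + f) - b * jacobiSym a b := by
  rw [jacobiSym_add_right_of_four_mul_dvd hb hf, ← sub_mul, Nat.cast_add, add_sub_cancel_left]
  exact hr.mul_right _

lemma periodic_coprime_of_dvd {N f : ℕ} (h : N ∣ f) :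
    Function.Periodic (fun a => Nat.Coprime a N) f := by
  obtain ⟨k, rfl⟩ := h
  simp [Function.Periodic]

/-- **Coherence of the twisted Stickelberger 2-adic measure.** For `m ≥ 3` squarefree,
`m ≡ 3 (mod 4)`, `χ(a) = J(m|a)`, `c` odd coprime to `m`, `f_n = 2^(n+2)·m`, and
`T_n(c) = ∑_a (λ^n_a(c) + (1−c)/2)·a·χ(a)` over `1 ≤ a ≤ f_n` coprime to `2m`, one has
`T_{n+1}(c) ≡ T_n(c) (mod 2^(n+2))` for every `n ≥ 0`. -/
theorem twisted_measure_coherence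
    (m : ℕ) (hm : 3 ≤ m) (hsf : Squarefree m) (hm4 : m % 4 = 3)
    (c : ℕ) (hc : 0 < c) (hcodd : c % 2 = 1) (hcm : Nat.gcd c m = 1)
    (a' : ℕ → ℕ → ℕ) (lam : ℕ → ℕ → ℤ)
    (ha' : ∀ n : ℕ, ∀ a ∈ (Finset.Icc 1 (2 ^ (n + 2) * m)).filter
        (fun a => Nat.Coprime a (2 * m)),
      1 ≤ a' n a ∧ a' n a ≤ 2 ^ (n + 2) * m ∧ a' n a * c ≡ a [MOD 2 ^ (n + 2) * m])
    (hlam : ∀ n : ℕ, ∀ a ∈ (Finset.Icc 1 (2 ^ (n + 2) * m)).filter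
        (fun a => Nat.Coprime a (2 * m)),
      lam n a * ((2 ^ (n + 2) * m : ℕ) : ℤ) = (a' n a : ℤ) * c - a) :
    ∀ n : ℕ,
      (2 : ℤ) ^ (n + 2) ∣
        (∑ a ∈ (Finset.Icc 1 (2 ^ (n + 3) * m)).filter
            (fun a => Nat.Coprime a (2 * m)),
          (lam (n + 1) a + (1 - (c : ℤ)) / 2) * (a : ℤ) * jacobiSym (m : ℤ) a)
        - (∑ a ∈ (Finset.Icc 1 (2 ^ (n + 2) * m)).filter
            (fun a => Nat.Coprime a (2 * m)),
          (lam n a + (1 - (c : ℤ)) / 2) * (a : ℤ) * jacobiSym (m : ℤ) a) := by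
  intro n
  have hcoeff (k : ℕ) (a : ℕ) (ha : a ∈ Icc 1 (2 ^ (k + 2) * m)) (ham : a.Coprime (2 * m)) :
      IsTwistCoeff (2 ^ (k + 2) * m) c a (lam k a) := by
    have hmem := mem_filter (p := (Nat.Coprime · (2 * m))).mpr ⟨ha, ham⟩
    obtain ⟨one_le, le_level, -⟩ := ha' k a hmem
    exact ⟨a' k a, mem_Icc.mpr ⟨one_le, le_level⟩, by rw [hlam k a hmem]; ring⟩
  have hc_odd : Odd c := Nat.odd_iff.mpr hcodd
  have hfc : IsCoprime ((2 ^ (n + 2) * m : ℕ) : ℤ) c := Nat.isCoprime_iff_coprime.mpr <|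
    .mul_left ((Nat.coprime_two_left.mpr hc_odd).pow_left _) (Nat.Coprime.symm hcm)
  have four_mul_dvd : 4 * m ∣ 2 ^ (n + 2) * m := ⟨2 ^ n, by ring⟩
  have hperiodic : Function.Periodic (fun a => a.Coprime (2 * m)) (2 ^ (n + 2) * m) :=
    periodic_coprime_of_dvd <| (Nat.mul_dvd_mul_right (by decide) m).trans four_mul_dvd
  have hvariation (a : ℕ) (ha : a.Coprime (2 * m)) :=
    dvd_mul_jacobiSym_add_sub (a := m) (r := 2 ^ (n + 2))
      (Nat.coprime_two_right.mp ha.coprime_mul_right_right) four_mul_dvd (by simp)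
  have hlevel : 2 ^ (n + 3) * m = 2 * (2 ^ (n + 2) * m) := by ring
  have hcoeff_succ := hcoeff (n + 1)
  rw [hlevel] at hcoeff_succ ⊢
  simpa only [mul_assoc, Int.cast_id] using twisted_measure_coherence_general (R := ℤ) hfc
    hc_odd.natCast two_ne_zero hperiodic (hcoeff n) hcoeff_succ hvariation
end
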